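/- For all integers 1 ≤ i ≤ d there exist constants C₁(d,i) > 0 and C₂(d,i) > 0 such that for all integers 0 ≤ ℓ ≤ ℓ': μ_{di}(F_{ℓ,ℓ'}(d,i)) ≤ C₁ · binom(ℓ'−ℓ+binom(d,i), ℓ'−ℓ+1) · q^{−ℓ(d−i)−ℓ'}, and in particular μ_{di}(E_ℓ(d,i)) ≤ C₂ · q^{−ℓ(d−i+1)}. Here E_ℓ(d,i) = {s ∈ M_{d,i}(𝒪) : ‖s₁ ∧ ⋯ ∧ s_i‖ ≤ q^{−ℓ}} (s₁, …, s_i the columns of s), and F_{ℓ,ℓ'}(d,i) = E_ℓ(d,i) ∩ {s ∈ M_{d,i}(𝒪) : |c_{{1,…,i}}(s)| ≤ q^{−ℓ'}}, where c_{{1,…,i}}(s) is the determinant of the top i×i submatrix of s. -/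

import Mathlib

/-!
The estimate holds without the binomial factor, which is at least `1`: both measures are bounded
by `4 ^ i` times the stated power of `q`.

Let `s` be an integral `d × i` matrix whose maximal minors are all divisible by `X ^ ℓ`. Column
elimination over `𝒪` gives `s = u T` with `u` integral and `T` an upper triangular Hermite normal
form of determinant exactly `X ^ ℓ` (`exists_split`, `exists_family`). If the top minor of `s` is
moreover divisible by `X ^ ℓ'`, then the top minor of `u` is divisible by `X ^ (ℓ' - ℓ)`, and the
same factorization applied to the top block of `u` writes it as `w R` with `det R = X ^ (ℓ' - ℓ)`
(`exists_mem_rowLat`). So the first `i` rows of `s` lie in the lattice `𝒪ⁱ R T`, of index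
`q ^ ℓ'`, and the remaining `d - i` rows lie in `𝒪ⁱ T`, of index `q ^ ℓ`. For a fixed pair `(T, R)`
these matrices form a subgroup of `M(𝒪)` of index `q ^ (i ℓ' + (d - i) ℓ)`, whose measure is the
inverse of that index (`measure_rowLat_mul_le`). There are at most `2 ^ i q ^ ((i - 1) ℓ)` forms
`T` and `2 ^ i q ^ ((i - 1) (ℓ' - ℓ))` forms `R`, so the sum over all pairs is at most
`4 ^ i q ^ (-ℓ (d - i) - ℓ')` (`measure_le`). The bound for `E_ℓ` is the case `ℓ' = ℓ`, where the
condition on the top minor is automatic.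
-/

open MeasureTheory
open scoped Classical ENNReal

noncomputable section

variable (F : Type*) [Field F] [Fintype F]

/-- The absolute value `|x| = q^{-v(x)}` on the Laurent series field `K = 𝔽_q((X))`,
where `v` is the `X`-adic valuation (the order of vanishing). -/
def absv (x : LaurentSeries F) : ℝ :=
  if x = 0 then 0 else (Fintype.card F : ℝ) ^ (-(HahnSeries.order x))

instance : MeasurableSpace (LaurentSeries F) := borel _

instance (m n : ℕ) : MeasurableSpace (Matrix (Fin m) (Fin n) (LaurentSeries F)) := borel _

instance (d : ℕ) : MeasurableSpace (Fin d → LaurentSeries F) := borel _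

/-- the set of matrices with all entries in the valuation ring `𝒪 = 𝔽_q[[X]] = {x : |x| ≤ 1}`. -/
def intMat (m n : ℕ) : Set (Matrix (Fin m) (Fin n) (LaurentSeries F)) :=
  {s | ∀ k l, absv F (s k l) ≤ 1}

/-- sup norm of a vector in `K^d` -/
def supNorm {d : ℕ} (v : Fin d → LaurentSeries F) : ℝ := ⨆ j, absv F (v j)

/-- the `i × i` minor of a `d × i` matrix with row set `I`. -/
def minor {d i : ℕ} (s : Matrix (Fin d) (Fin i) (LaurentSeries F))
    (I : {I : Finset (Fin d) // I.card = i}) : LaurentSeries F :=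
  (s.submatrix (fun a : Fin i => ((I.1.orderIsoOfFin I.2 a : {x // x ∈ I.1}) : Fin d)) id).det

/-- The norm `‖s₁ ∧ ⋯ ∧ s_i‖` of the wedge product of the columns of a `d × i` matrix:
the maximum of the absolute values of its `i × i` minors. -/
def wedgeNorm {d i : ℕ} (s : Matrix (Fin d) (Fin i) (LaurentSeries F)) : ℝ :=
  ⨆ I : {I : Finset (Fin d) // I.card = i}, absv F (minor F s I)

/-- `X ∈ K`, the uniformizer. -/
def Xu : LaurentSeries F := HahnSeries.single 1 1

/-- the diagonal element `g_t = diag(X^{-nt} I_m, X^{mt} I_n)`. -/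
def gMat (m n : ℕ) (t : ℤ) : Matrix (Fin (m + n)) (Fin (m + n)) (LaurentSeries F) :=
  Matrix.reindex finSumFinEquiv finSumFinEquiv
    (Matrix.fromBlocks ((Xu F ^ (-(n * t))) • (1 : Matrix (Fin m) (Fin m) (LaurentSeries F))) 0 0
      ((Xu F ^ ((m : ℤ) * t)) • (1 : Matrix (Fin n) (Fin n) (LaurentSeries F))))

/-- the upper block-unipotent element `u_s` with blocks `(I_m, s; 0, I_n)`. -/
def uMat {m n : ℕ} (s : Matrix (Fin m) (Fin n) (LaurentSeries F)) :
    Matrix (Fin (m + n)) (Fin (m + n)) (LaurentSeries F) :=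
  Matrix.reindex finSumFinEquiv finSumFinEquiv (Matrix.fromBlocks 1 s 0 1)

/-- the exponent `β_i = m/i` for `i ≤ m` and `n/(m+n-i)` for `i > m`. -/
def betaE (m n i : ℕ) : ℝ := if i ≤ m then (m : ℝ) / i else (n : ℝ) / ((m + n - i : ℕ) : ℝ)

end

/-! ### Row lattices over `𝒪 = 𝔽_q[[X]]` and Hermite normal forms -/

section Algebra

open scoped Matrix

variable {F : Type*} [Field F] {n : ℕ}

/-- `IsReps T E`: the finite set `E` is a full system of representatives of the row lattice
`𝒪ⁿ T` in `𝒪ⁿ`, and `T` is injective on row vectors; that is, every row vector is `e + w T` for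
exactly one pair `(e, w)` with `e ∈ E`. -/
def IsReps (T : Matrix (Fin n) (Fin n) (PowerSeries F)) (E : Finset (Fin n → PowerSeries F)) :
    Prop :=
  ∀ r, ∃! p : (Fin n → PowerSeries F) × (Fin n → PowerSeries F), p.1 ∈ E ∧ p.1 + p.2 ᵥ* T = r

/-- `HasIndex T ℓ`: the determinant of `T` is `X ^ ℓ` and the row lattice `𝒪ⁿ T` has index
`q ^ ℓ` in `𝒪ⁿ`. -/
def HasIndex [Fintype F] (T : Matrix (Fin n) (Fin n) (PowerSeries F)) (ℓ : ℕ) : Prop :=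
  T.det = PowerSeries.X ^ ℓ ∧ ∃ E, E.card = Fintype.card F ^ ℓ ∧ IsReps T E

/-- Row lattices are nested as `𝒪ⁿ R T ⊆ 𝒪ⁿ T ⊆ 𝒪ⁿ`, and indices multiply. -/
lemma IsReps.mul {R T : Matrix (Fin n) (Fin n) (PowerSeries F)}
    {E E' : Finset (Fin n → PowerSeries F)} (hR : IsReps R E) (hT : IsReps T E') :
    ∃ E'', E''.card = E.card * E'.card ∧ IsReps (R * T) E'' := by
  refine ⟨(E ×ˢ E').image fun p => p.2 + p.1 ᵥ* T, ?_, ?_⟩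
  · rw [Finset.card_image_of_injOn, Finset.card_product]
    rintro ⟨a, b⟩ hab ⟨a', b'⟩ hab' h
    simp only [Finset.coe_product, Set.mem_prod, Finset.mem_coe] at hab hab'
    have := (hT (b + a ᵥ* T)).unique (y₁ := (b, a)) (y₂ := (b', a')) ⟨hab.2, rfl⟩ ⟨hab'.2, h.symm⟩
    simp only [Prod.mk.injEq] at this ⊢
    exact this.symm
  · intro z
    obtain ⟨⟨t, w⟩, ⟨ht, htw⟩, -⟩ := hT z
    obtain ⟨⟨r, w'⟩, ⟨hr, hrw⟩, -⟩ := hR w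
    simp only at ht htw hr hrw
    refine ⟨(t + r ᵥ* T, w'), ⟨Finset.mem_image.2 ⟨(r, t), by simp [ht, hr], rfl⟩, ?_⟩, ?_⟩
    · simp only
      rw [← Matrix.vecMul_vecMul, add_assoc, ← Matrix.add_vecMul, hrw, htw]
    · rintro ⟨y, v⟩ ⟨hy, hyv⟩
      obtain ⟨⟨r', t'⟩, hrt, rfl⟩ := Finset.mem_image.1 hy
      simp only [Finset.mem_product] at hrt hyv
      rw [← Matrix.vecMul_vecMul, add_assoc, ← Matrix.add_vecMul] at hyv
      have h1 := (hT z).unique (y₁ := (t, w)) (y₂ := (t', r' + v ᵥ* R)) ⟨ht, htw⟩ ⟨hrt.2, hyv⟩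
      simp only [Prod.mk.injEq] at h1
      have h2 := (hR w).unique (y₁ := (r, w')) (y₂ := (r', v)) ⟨hr, hrw⟩ ⟨hrt.1, h1.2.symm⟩
      simp only [Prod.mk.injEq] at h2
      simp [h1.1, h2.1, h2.2]

lemma HasIndex.mul [Fintype F] {R T : Matrix (Fin n) (Fin n) (PowerSeries F)} {m ℓ : ℕ}
    (hR : HasIndex R m) (hT : HasIndex T ℓ) : HasIndex (R * T) (m + ℓ) := by
  obtain ⟨hRd, E, hE, hRE⟩ := hR
  obtain ⟨hTd, E', hE', hTE⟩ := hT
  obtain ⟨E'', hc, h⟩ := hRE.mul hTE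
  exact ⟨by rw [Matrix.det_mul, hRd, hTd, pow_add], E'', by rw [hc, hE, hE', pow_add], h⟩

/-- The polynomials of degree `< a` represent `𝒪 / X ^ a`. -/
lemma exists_reps_X_pow [Fintype F] (a : ℕ) :
    ∃ E : Finset (PowerSeries F), E.card = Fintype.card F ^ a ∧
      ∀ y, ∃! p : PowerSeries F × PowerSeries F, p.1 ∈ E ∧ p.1 + p.2 * PowerSeries.X ^ a = y := by
  let e : (Fin a → F) → PowerSeries F := fun f => PowerSeries.mk fun k =>
    if h : k < a then f ⟨k, h⟩ else 0
  refine ⟨Finset.univ.image e, ?_, ?_⟩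
  · rw [Finset.card_image_of_injective]
    · simp
    · intro f g h
      ext k
      have := congrArg (PowerSeries.coeff k) h
      simpa [e, PowerSeries.coeff_mk] using this
  · intro y
    refine ⟨(e fun k => PowerSeries.coeff k y, PowerSeries.mk fun k => PowerSeries.coeff (k + a) y),
      ⟨by simp, ?_⟩, ?_⟩
    · ext k
      simp only [e, map_add, PowerSeries.coeff_mk, PowerSeries.coeff_mul_X_pow']
      by_cases h : k < a
      · simp [h]
      · simp [h, not_lt.1 h]
    · rintro ⟨x, w⟩ ⟨hx, rfl⟩
      obtain ⟨f, -, rfl⟩ := Finset.mem_image.1 hx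
      simp only [Prod.mk.injEq]
      constructor
      · ext k
        by_cases h : k < a
        · simp [e, h, PowerSeries.coeff_mul_X_pow']
        · simp [e, h]
      · ext k
        simp [e]

/-- The matrix with rows `(X ^ a, t)` and `(0, T)`. -/
noncomputable def blk (a : ℕ) (t : Fin n → PowerSeries F) (T : Matrix (Fin n) (Fin n) (PowerSeries F)) :
    Matrix (Fin (n + 1)) (Fin (n + 1)) (PowerSeries F) :=
  Matrix.of (Fin.cons (Fin.cons (PowerSeries.X ^ a) t) fun k => Fin.cons 0 (T k))

/-- The matrix with first column `c` and remaining columns those of `U`. -/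
noncomputable def consCol {d : ℕ} (c : Fin d → PowerSeries F) (U : Matrix (Fin d) (Fin n) (PowerSeries F)) :
    Matrix (Fin d) (Fin (n + 1)) (PowerSeries F) :=
  Matrix.of fun k => Fin.cons (c k) (U k)

lemma det_blk (a : ℕ) (t : Fin n → PowerSeries F) (T : Matrix (Fin n) (Fin n) (PowerSeries F)) :
    (blk a t T).det = PowerSeries.X ^ a * T.det := by
  rw [Matrix.det_succ_column_zero, Fin.sum_univ_succ]
  have h : (blk a t T).submatrix Fin.succ (Fin.succAbove 0) = T := by
    ext k j : 1
    simp [blk]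
  rw [Fin.succAbove_zero] at h
  simp only [Fin.succAbove_zero, h]
  simp [blk]

lemma cons_vecMul_blk (a : ℕ) (t : Fin n → PowerSeries F)
    (T : Matrix (Fin n) (Fin n) (PowerSeries F)) (x : PowerSeries F) (w : Fin n → PowerSeries F) :
    (Fin.cons x w : Fin (n + 1) → PowerSeries F) ᵥ* blk a t T =
      Fin.cons (x * PowerSeries.X ^ a) (x • t + w ᵥ* T) := by
  funext j
  refine Fin.cases ?_ (fun j => ?_) j <;>
    simp [Matrix.vecMul, dotProduct, Fin.sum_univ_succ, blk]

lemma HasIndex.blk [Fintype F] {b : ℕ} {T : Matrix (Fin n) (Fin n) (PowerSeries F)}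
    (hT : HasIndex T b) (a : ℕ) (t : Fin n → PowerSeries F) : HasIndex (blk a t T) (a + b) := by
  obtain ⟨hd, E, hE, hTE⟩ := hT
  obtain ⟨A, hA, hAu⟩ := exists_reps_X_pow (F := F) a
  refine ⟨by rw [det_blk, hd, pow_add],
    (A ×ˢ E).image fun p => (Fin.cons p.1 p.2 : Fin (n + 1) → PowerSeries F), ?_, ?_⟩
  · rw [Finset.card_image_of_injective, Finset.card_product, hA, hE, pow_add]
    rintro ⟨x, r⟩ ⟨x', r'⟩ h
    simpa [Fin.cons_inj] using h
  · intro z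
    obtain ⟨⟨x, w₀⟩, ⟨hx, hxw⟩, -⟩ := hAu (z 0)
    obtain ⟨⟨r, w⟩, ⟨hr, hrw⟩, -⟩ := hTE (Fin.tail z - w₀ • t)
    simp only at hx hxw hr hrw
    have key : ∀ (x' : PowerSeries F) (r' : Fin n → PowerSeries F) (w₀' : PowerSeries F)
        (w' : Fin n → PowerSeries F),
        (Fin.cons x' r' : Fin (n + 1) → PowerSeries F) +
          (Fin.cons w₀' w' : Fin (n + 1) → PowerSeries F) ᵥ* _root_.blk a t T = z ↔
        x' + w₀' * PowerSeries.X ^ a = z 0 ∧ r' + w' ᵥ* T = Fin.tail z - w₀' • t := by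
      intro x' r' w₀' w'
      rw [cons_vecMul_blk, funext_iff, Fin.forall_fin_succ, funext_iff]
      refine and_congr (by simp) (forall_congr' fun j => ?_)
      simp only [Pi.add_apply, Fin.cons_succ, Pi.sub_apply, Fin.tail, Pi.smul_apply, smul_eq_mul]
      constructor <;> intro h <;> linear_combination h
    refine ⟨(Fin.cons x r, Fin.cons w₀ w),
      ⟨Finset.mem_image.2 ⟨(x, r), by simp [hx, hr], rfl⟩, (key _ _ _ _).2 ⟨hxw, hrw⟩⟩, ?_⟩
    rintro ⟨y, v⟩ ⟨hy, hyv⟩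
    obtain ⟨⟨x', r'⟩, hxr, rfl⟩ := Finset.mem_image.1 hy
    simp only [Finset.mem_product] at hxr
    obtain ⟨w₀', w', rfl⟩ : ∃ w₀' w', v = Fin.cons w₀' w' := ⟨v 0, Fin.tail v, by simp⟩
    obtain ⟨h1, h2⟩ := (key _ _ _ _).1 hyv
    have e1 := (hAu (z 0)).unique (y₁ := (x, w₀)) (y₂ := (x', w₀')) ⟨hx, hxw⟩ ⟨hxr.1, h1⟩
    simp only [Prod.mk.injEq] at e1
    obtain ⟨rfl, rfl⟩ := e1
    have e2 := (hTE _).unique (y₁ := (r, w)) (y₂ := (r', w')) ⟨hr, hrw⟩ ⟨hxr.2, h2⟩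
    simp only [Prod.mk.injEq] at e2
    obtain ⟨rfl, rfl⟩ := e2
    rfl

lemma mul_consCol {m d : ℕ} (M : Matrix (Fin m) (Fin d) (PowerSeries F))
    (c : Fin d → PowerSeries F) (U : Matrix (Fin d) (Fin n) (PowerSeries F)) :
    M * consCol c U = consCol (M *ᵥ c) (M * U) := by
  ext k j : 1
  refine Fin.cases ?_ (fun j => ?_) j <;>
    simp [Matrix.mul_apply, consCol, Matrix.mulVec, dotProduct]

lemma consCol_mul_blk {d : ℕ} (c : Fin d → PowerSeries F)
    (U : Matrix (Fin d) (Fin n) (PowerSeries F)) (a : ℕ) (t : Fin n → PowerSeries F)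
    (T : Matrix (Fin n) (Fin n) (PowerSeries F)) :
    consCol c U * blk a t T =
      consCol (fun k => c k * PowerSeries.X ^ a) (Matrix.vecMulVec c t + U * T) := by
  funext k
  change consCol c U k ᵥ* blk a t T = _
  exact cons_vecMul_blk a t T (c k) (U k)

/-- A column is divided by the highest possible power `X ^ a` with `a ≤ ℓ`; if `a < ℓ`, some
entry of the quotient is a unit. -/
lemma exists_pivot {d : ℕ} (ℓ : ℕ) (s : Fin d → PowerSeries F) :
    ∃ a ≤ ℓ, ∃ c : Fin d → PowerSeries F, (∀ k, s k = c k * PowerSeries.X ^ a) ∧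
      (a = ℓ ∨ ∃ p, IsUnit (c p)) := by
  let P : ℕ → Prop := fun a => ∀ k, (PowerSeries.X : PowerSeries F) ^ a ∣ s k
  have hP : P (Nat.findGreatest P ℓ) := Nat.findGreatest_spec (P := P) (Nat.zero_le ℓ) (by simp [P])
  have hle := Nat.findGreatest_le (P := P) ℓ
  set a := Nat.findGreatest P ℓ with ha
  choose c hc using hP
  refine ⟨a, hle, c, fun k => by rw [hc k, mul_comm], ?_⟩
  rcases hle.eq_or_lt with h | h
  · exact Or.inl h
  right
  have hn : ¬ P (a + 1) := Nat.findGreatest_is_greatest (P := P) (Nat.lt_succ_self a) h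
  obtain ⟨p, hp⟩ := not_forall.1 hn
  refine ⟨p, ?_⟩
  rw [PowerSeries.isUnit_iff_constantCoeff, isUnit_iff_ne_zero]
  intro h0
  apply hp
  obtain ⟨y, hy⟩ := PowerSeries.X_dvd_iff.2 h0
  exact ⟨y, by rw [hc p, hy]; ring⟩

/-- The matrix with first row `r` and remaining rows those of `M`. -/
noncomputable def consRow {d : ℕ} (r : Fin d → PowerSeries F)
    (M : Matrix (Fin n) (Fin d) (PowerSeries F)) : Matrix (Fin (n + 1)) (Fin d) (PowerSeries F) :=
  Matrix.of (Fin.cons r fun k => M k)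

/-- If row `p` of `U` vanishes, prepending the row `e_p` to `M` isolates the pivot `c p`. -/
lemma det_consRow_mul_consCol {d : ℕ} {p : Fin d} {U : Matrix (Fin d) (Fin n) (PowerSeries F)}
    (hU : U p = 0) (c : Fin d → PowerSeries F) (M : Matrix (Fin n) (Fin d) (PowerSeries F)) :
    (consRow (Pi.single p 1) M * consCol c U).det = c p * (M * U).det := by
  have h0 : ∀ j : Fin n, (consRow (Pi.single p 1) M * consCol c U) 0 j.succ = 0 := by
    intro j
    have := congrFun hU j
    simp [Matrix.mul_apply, consRow, consCol, Pi.single_apply, this]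
  have h1 : (consRow (Pi.single p 1) M * consCol c U) 0 0 = c p := by
    simp [Matrix.mul_apply, consRow, consCol, Pi.single_apply]
  have h2 : (consRow (Pi.single p 1) M * consCol c U).submatrix Fin.succ Fin.succ = M * U := by
    ext k j : 1
    simp [Matrix.mul_apply, consRow, consCol]
  rw [Matrix.det_succ_row_zero, Fin.sum_univ_succ]
  simp only [h0, h1, Fin.succAbove_zero, h2]
  simp

/-- One step of column elimination. If `X ^ ℓ` divides all maximal minors of `S` (expressed
basis-free, as all `det (M * S)`), a matrix `[[X ^ a, t], [0, 1]]` can be split off on the right so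
that the remaining columns satisfy the same condition with `ℓ - a`. -/
lemma exists_split {d ℓ : ℕ} (S : Matrix (Fin d) (Fin (n + 1)) (PowerSeries F))
    (hS : ∀ M : Matrix (Fin (n + 1)) (Fin d) (PowerSeries F), PowerSeries.X ^ ℓ ∣ (M * S).det) :
    ∃ a ≤ ℓ, ∃ (c : Fin d → PowerSeries F) (t : Fin n → PowerSeries F)
      (U : Matrix (Fin d) (Fin n) (PowerSeries F)), S = consCol c U * blk a t 1 ∧
      ∀ M : Matrix (Fin n) (Fin d) (PowerSeries F), PowerSeries.X ^ (ℓ - a) ∣ (M * U).det := by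
  obtain ⟨a, hal, c, hc, h⟩ := exists_pivot ℓ fun k => S k 0
  have hdec : ∀ t : Fin n → PowerSeries F,
      S = consCol c (Matrix.of fun k j => S k (Fin.succ j) - c k * t j) * blk a t 1 := by
    intro t
    rw [consCol_mul_blk]
    ext k j : 1
    refine Fin.cases ?_ (fun j => ?_) j
    · simpa [consCol] using hc k
    · simp [consCol, Matrix.vecMulVec_apply]
  rcases h with rfl | ⟨p, v, hv⟩
  · exact ⟨a, le_rfl, c, 0, _, hdec 0, by simp⟩
  · refine ⟨a, hal, c, fun j => S p (Fin.succ j) * ↑v⁻¹, _, hdec _, fun M => ?_⟩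
    set t : Fin n → PowerSeries F := fun j => S p (Fin.succ j) * ↑v⁻¹
    set U : Matrix (Fin d) (Fin n) (PowerSeries F) :=
      Matrix.of fun k j => S k (Fin.succ j) - c k * t j with hU
    have hUp : ∀ j, U p j = 0 := by
      intro j
      simp only [hU, Matrix.of_apply, t, ← hv]
      rw [mul_comm, mul_assoc, Units.inv_mul, mul_one, sub_self]
    have := hS (consRow (Pi.single p 1) M)
    rw [hdec t, ← Matrix.mul_assoc, Matrix.det_mul, det_blk, Matrix.det_one, mul_one,
      det_consRow_mul_consCol (funext hUp), mul_comm, ← hv] at this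
    obtain ⟨k, rfl⟩ := Nat.exists_eq_add_of_le hal
    rw [pow_add, mul_dvd_mul_iff_left (pow_ne_zero _ PowerSeries.X_ne_zero)] at this
    rw [Nat.add_sub_cancel_left]
    exact (Units.dvd_mul_left).1 this

/-- Counting sublattices of `𝒪ⁿ`: the Hermite normal forms of determinant `X ^ ℓ` number at most
`2 ^ n * q ^ ((n - 1) ℓ)`, and every `S` whose maximal minors are divisible by `X ^ ℓ` has one of
them as a right factor. The count is stated in a summed form which is stable under the induction on
`n`, starting at `n = 0`. -/
lemma exists_family (F : Type*) [Field F] [Fintype F] (n : ℕ) :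
    ∃ H : ℕ → Finset (Matrix (Fin n) (Fin n) (PowerSeries F)),
      (∀ ℓ, ∑ b ∈ Finset.range (ℓ + 1), (H b).card * Fintype.card F ^ b ≤
        2 ^ n * Fintype.card F ^ (n * ℓ)) ∧
      (∀ ℓ, ∀ T ∈ H ℓ, HasIndex T ℓ) ∧
      ∀ (ℓ d : ℕ) (S : Matrix (Fin d) (Fin n) (PowerSeries F)),
        (∀ M : Matrix (Fin n) (Fin d) (PowerSeries F), PowerSeries.X ^ ℓ ∣ (M * S).det) →
        ∃ T ∈ H ℓ, ∃ U : Matrix (Fin d) (Fin n) (PowerSeries F), S = U * T := by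
  induction n with
  | zero =>
    refine ⟨fun ℓ => if ℓ = 0 then {1} else ∅, ?_, ?_, ?_⟩
    · intro ℓ
      rw [Finset.sum_eq_single_of_mem 0 (by simp)]
      · simp
      · intro b _ hb
        simp [hb]
    · intro ℓ T hT
      replace hT : T ∈ (if ℓ = 0 then {1} else ∅ : Finset _) := hT
      split_ifs at hT with h
      · subst h
        refine ⟨by simp, {0}, by simp, fun r => ⟨(0, 0), ⟨by simp, Subsingleton.elim _ _⟩,
          fun _ _ => Subsingleton.elim _ _⟩⟩
      · simp at hT
    · intro ℓ d S hS
      have h := hS 0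
      have hℓ : ℓ = 0 := by
        by_contra h0
        rw [Matrix.det_isEmpty] at h
        have := (dvd_pow_self (PowerSeries.X : PowerSeries F) h0).trans h
        rw [PowerSeries.X_dvd_iff] at this
        simp at this
      exact ⟨1, by simp [hℓ], S, by simp⟩
  | succ n ih =>
    obtain ⟨H, hcard, hidx, hex⟩ := ih
    have hE : ∀ b, ∀ T ∈ H b, ∃ E, E.card = Fintype.card F ^ b ∧ IsReps T E :=
      fun b T hT => (hidx b T hT).2
    choose! E hEc hEr using hE
    -- The top row is only needed modulo the row lattice of `T`, leaving `q ^ b` choices.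
    let H' : ℕ → Finset (Matrix (Fin (n + 1)) (Fin (n + 1)) (PowerSeries F)) := fun ℓ =>
      (Finset.range (ℓ + 1)).biUnion fun b => (H b).biUnion fun T =>
        (E b T).image fun r => blk (ℓ - b) r T
    have hc' : ∀ ℓ, (H' ℓ).card ≤ 2 ^ n * Fintype.card F ^ (n * ℓ) := by
      intro ℓ
      refine le_trans ?_ (hcard ℓ)
      refine Finset.card_biUnion_le.trans (Finset.sum_le_sum fun b _ => ?_)
      refine Finset.card_biUnion_le_card_mul _ _ _ fun T hT => ?_
      exact Finset.card_image_le.trans (hEc b T hT).le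
    have hq : 2 ≤ Fintype.card F := Fintype.one_lt_card
    refine ⟨H', ?_, ?_, ?_⟩
    · intro ℓ
      have geo : ∀ ℓ : ℕ, ∑ b ∈ Finset.range (ℓ + 1), Fintype.card F ^ ((n + 1) * b) ≤
          2 * Fintype.card F ^ ((n + 1) * ℓ) := by
        intro ℓ
        induction ℓ with
        | zero => simp
        | succ ℓ ih =>
          rw [Finset.sum_range_succ]
          have : 2 * Fintype.card F ^ ((n + 1) * ℓ) ≤ Fintype.card F ^ ((n + 1) * (ℓ + 1)) := by
            rw [mul_add (n + 1), pow_add, mul_comm 2]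
            refine Nat.mul_le_mul_left _ (hq.trans ?_)
            exact Nat.le_self_pow (by omega) _
          omega
      calc _ ≤ ∑ b ∈ Finset.range (ℓ + 1), 2 ^ n * Fintype.card F ^ ((n + 1) * b) := by
            refine Finset.sum_le_sum fun b _ => ?_
            refine (Nat.mul_le_mul_right _ (hc' b)).trans (le_of_eq ?_)
            ring
        _ ≤ _ := by
            rw [← Finset.mul_sum, pow_succ, mul_assoc]
            exact Nat.mul_le_mul_left _ (geo ℓ)
    · intro ℓ T hT
      simp only [H', Finset.mem_biUnion, Finset.mem_image, Finset.mem_range] at hT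
      obtain ⟨b, hb, T, hT, r, -, rfl⟩ := hT
      have := (hidx b T hT).blk (ℓ - b) r
      rwa [Nat.sub_add_cancel (by omega)] at this
    · intro ℓ d S hS
      obtain ⟨a, hal, c, t, U, rfl, hU⟩ := exists_split S hS
      obtain ⟨T, hT, U, rfl⟩ := hex _ _ _ hU
      obtain ⟨⟨r, w⟩, ⟨hr, rfl⟩, -⟩ := hEr _ T hT t
      refine ⟨blk a r T, ?_, consCol c (Matrix.vecMulVec c w + U), ?_⟩
      · simp only [H', Finset.mem_biUnion, Finset.mem_image, Finset.mem_range]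
        exact ⟨ℓ - a, by omega, T, hT, r, hr, by rw [Nat.sub_sub_self hal]⟩
      · rw [consCol_mul_blk, consCol_mul_blk]
        congr 1
        rw [Matrix.vecMulVec_add, Matrix.mul_one, Matrix.add_mul, add_assoc,
          Matrix.vecMulVec_mul]

end Algebra

/-! ### Minors and absolute values -/

section Minors

variable {F : Type*} [Field F]

/-- The weak form of the Cauchy–Binet formula that is needed: a common divisor of the maximal
minors of `S` divides `det (M * S)` for every `M`. -/
lemma dvd_det_mul_of_dvd_minors {A : Type*} [CommRing A] {d i : ℕ} (S : Matrix (Fin d) (Fin i) A)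
    (x : A)
    (h : ∀ I : {I : Finset (Fin d) // I.card = i},
      x ∣ (S.submatrix (fun a : Fin i => ((I.1.orderIsoOfFin I.2 a : {x // x ∈ I.1}) : Fin d))
        id).det)
    (M : Matrix (Fin i) (Fin d) A) : x ∣ (M * S).det := by
  have hexp : (M * S).det = ∑ f : Fin i → Fin d, (∏ r, M r (f r)) * (S.submatrix f id).det := by
    have h1 : (M * S) = fun r => ∑ k, M r k • S k := by
      ext r j : 1
      simp [Matrix.mul_apply]
    have h2 := (Matrix.detRowAlternating (n := Fin i) (R := A)).toMultilinearMap.map_sum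
      (fun r k => M r k • S k)
    have h3 : (M * S).det = (Matrix.detRowAlternating (n := Fin i) (R := A)).toMultilinearMap
        (fun r => ∑ k, M r k • S k) := by
      rw [← h1]; rfl
    rw [h3, h2]
    refine Finset.sum_congr rfl fun f _ => ?_
    rw [MultilinearMap.map_smul_univ]
    rfl
  rw [hexp]
  refine Finset.dvd_sum fun f _ => Dvd.dvd.mul_left ?_ _
  by_cases hf : Function.Injective f
  · have hc : (Finset.univ.image f).card = i := by
      rw [Finset.card_image_of_injective _ hf, Finset.card_fin]
    let e := (Finset.univ.image f).orderIsoOfFin hc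
    let σ₀ : Fin i → Fin i := fun r => e.symm ⟨f r, Finset.mem_image_of_mem _ (Finset.mem_univ _)⟩
    have hσ : Function.Injective σ₀ := by
      intro r r' hr
      have := e.symm.injective hr
      exact hf (congrArg Subtype.val this)
    let σ : Equiv.Perm (Fin i) := Equiv.ofBijective σ₀ (Finite.injective_iff_bijective.1 hσ)
    have hfe : S.submatrix f id =
        (S.submatrix (fun a : Fin i => (e a : Fin d)) id).submatrix σ id := by
      ext r j : 1
      simp [σ, σ₀]
    rw [hfe, Matrix.det_permute]
    exact Dvd.dvd.mul_left (h ⟨_, hc⟩) _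
  · obtain ⟨r, r', hr, hne⟩ : ∃ r r', f r = f r' ∧ r ≠ r' := by
      simpa [Function.Injective] using hf
    rw [Matrix.det_zero_of_row_eq hne]
    · exact dvd_zero _
    · funext j
      simp [hr]

lemma absv_le_one_iff [Fintype F] (x : LaurentSeries F) :
    absv F x ≤ 1 ↔ ∃ f, HahnSeries.ofPowerSeries ℤ F f = x := by
  have hq : (1 : ℝ) < Fintype.card F := by exact_mod_cast Fintype.one_lt_card
  rw [← LaurentSeries.val_le_one_iff_eq_coe]
  have := LaurentSeries.valuation_le_iff_coeff_lt_eq_zero F (D := 0) (f := x)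
  rw [neg_zero, WithZero.exp_zero] at this
  rw [this, absv]
  by_cases hx : x = 0
  · simp [hx]
  · rw [if_neg hx, ← zpow_zero (Fintype.card F : ℝ), zpow_le_zpow_iff_right₀ hq]
    constructor
    · intro h n hn
      exact HahnSeries.coeff_eq_zero_of_lt_order (by omega)
    · intro h
      by_contra hlt
      exact hx (HahnSeries.coeff_order_eq_zero.1 (h _ (by omega)))

lemma X_pow_dvd_of_absv_le [Fintype F] {f : PowerSeries F} {ℓ : ℕ}
    (h : absv F (HahnSeries.ofPowerSeries ℤ F f) ≤ (Fintype.card F : ℝ) ^ (-(ℓ : ℤ))) :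
    PowerSeries.X ^ ℓ ∣ f := by
  have hq : (1 : ℝ) < Fintype.card F := by exact_mod_cast Fintype.one_lt_card
  rw [PowerSeries.X_pow_dvd_iff]
  intro m hm
  rw [← LaurentSeries.coeff_coe_powerSeries]
  rw [absv] at h
  by_cases hx : HahnSeries.ofPowerSeries ℤ F f = 0
  · simp [hx]
  · rw [if_neg hx, zpow_le_zpow_iff_right₀ hq] at h
    exact HahnSeries.coeff_eq_zero_of_lt_order (by omega)

end Minors

/-! ### Measure of a product of row lattices -/

section Measure

open scoped Matrix

variable {F : Type*} [Field F] {d i : ℕ}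

instance [Fintype F] : BorelSpace (Matrix (Fin d) (Fin i) (LaurentSeries F)) := ⟨rfl⟩

/-- The set of `d × i` matrices over `K` whose `k`-th row lies in the row lattice `𝒪ⁱ (G k)`. -/
def rowLat (G : Fin d → Matrix (Fin i) (Fin i) (PowerSeries F)) :
    Set (Matrix (Fin d) (Fin i) (LaurentSeries F)) :=
  {s | ∀ k, ∃ w : Fin i → PowerSeries F, ∀ j, s k j = HahnSeries.ofPowerSeries ℤ F ((w ᵥ* G k) j)}

/-- Row `k` lies in `𝒪ⁱ (G k)` exactly when its product with `(G k)⁻¹` is integral, which is an open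
condition. -/
lemma isOpen_rowLat {G : Fin d → Matrix (Fin i) (Fin i) (PowerSeries F)}
    (hG : ∀ k, (G k).det ≠ 0) : IsOpen (rowLat G) := by
  let φ := HahnSeries.ofPowerSeries ℤ F
  have hφ : Function.Injective φ := HahnSeries.ofPowerSeries_injective
  have hopen : IsOpen (Set.range φ) := by
    have h := Valued.isOpen_integer (LaurentSeries F)
    convert h using 1
    ext x
    exact (LaurentSeries.val_le_one_iff_eq_coe F x).symm
  have hdet : ∀ k, IsUnit ((G k).map φ).det := by
    intro k
    rw [isUnit_iff_ne_zero, ← RingHom.mapMatrix_apply, ← RingHom.map_det]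
    exact (map_ne_zero_iff φ hφ).2 (hG k)
  have heq : rowLat G = ⋂ k, ⋂ j, (fun s : Matrix (Fin d) (Fin i) (LaurentSeries F) =>
      ∑ a, s k a * ((G k).map φ)⁻¹ a j) ⁻¹' Set.range φ := by
    ext s
    simp only [rowLat, Set.mem_ofPred_eq, Set.mem_iInter, Set.mem_preimage, Set.mem_range]
    refine forall_congr' fun k => ?_
    constructor
    · rintro ⟨w, hw⟩ j
      refine ⟨w j, ?_⟩
      have hs : s k = (φ ∘ w) ᵥ* (G k).map φ := by
        funext j
        rw [hw j, ← RingHom.map_vecMul]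
      change φ (w j) = (s k ᵥ* ((G k).map φ)⁻¹) j
      rw [hs, Matrix.vecMul_vecMul, Matrix.mul_nonsing_inv _ (hdet k), Matrix.vecMul_one]
      rfl
    · intro h
      choose w hw using h
      refine ⟨w, fun j => ?_⟩
      have hs : φ ∘ w = s k ᵥ* ((G k).map φ)⁻¹ := funext hw
      change s k j = φ _
      rw [RingHom.map_vecMul, hs, Matrix.vecMul_vecMul, Matrix.nonsing_inv_mul _ (hdet k),
        Matrix.vecMul_one]
  rw [heq]
  refine isOpen_iInter_of_finite fun k => isOpen_iInter_of_finite fun j => hopen.preimage ?_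
  refine continuous_finsetSum _ fun a _ => Continuous.mul ?_ continuous_const
  exact (continuous_apply a).comp (continuous_apply k)

/-- `rowLat G` is a subgroup of `M(𝒪)` of index `q ^ ∑ e k`, so its measure is at most the inverse
of that index. -/
lemma measure_rowLat_mul_le [Fintype F]
    (μ : Measure (Matrix (Fin d) (Fin i) (LaurentSeries F)))
    (hinv : ∀ a, μ.map (fun s => a + s) = μ) (hnorm : μ (intMat F d i) = 1)
    {G : Fin d → Matrix (Fin i) (Fin i) (PowerSeries F)} {e : Fin d → ℕ}
    (hG : ∀ k, HasIndex (G k) (e k)) :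
    (Fintype.card F : ℝ≥0∞) ^ (∑ k, e k) * μ (rowLat G) ≤ 1 := by
  let φ := HahnSeries.ofPowerSeries ℤ F
  have hφ : Function.Injective φ := HahnSeries.ofPowerSeries_injective
  have hmeas : MeasurableSet (rowLat G) := (isOpen_rowLat fun k => by
    rw [(hG k).1]; exact pow_ne_zero _ PowerSeries.X_ne_zero).measurableSet
  choose E hEc hE using fun k => (hG k).2
  -- The cosets `c + rowLat G`, for `c` with `k`-th row in `E k`, are disjoint and lie in `M(𝒪)`.
  let B : (Fin d → Fin i → PowerSeries F) → Set (Matrix (Fin d) (Fin i) (LaurentSeries F)) :=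
    fun c => (fun s => (Matrix.of fun k j => -φ (c k j)) + s) ⁻¹' rowLat G
  have htrans : ∀ a : Matrix (Fin d) (Fin i) (LaurentSeries F), Measurable fun s => a + s :=
    fun a => (continuous_const.add continuous_id).measurable
  have hB : ∀ c, μ (B c) = μ (rowLat G) := fun c => by
    rw [← Measure.map_apply (htrans _) hmeas, hinv]
  have hmem : ∀ c s, s ∈ B c → ∀ k, ∃ w : Fin i → PowerSeries F,
      ∀ j, s k j = φ ((c k + w ᵥ* G k) j) := by
    intro c s hs k
    obtain ⟨w, hw⟩ := hs k
    refine ⟨w, fun j => ?_⟩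
    have := hw j
    simp only [Matrix.add_apply, Matrix.of_apply] at this
    rw [Pi.add_apply, map_add]
    linear_combination this
  have hdisj : (↑(Fintype.piFinset E) : Set (Fin d → Fin i → PowerSeries F)).PairwiseDisjoint B := by
    intro c hc c' hc' hne
    refine Set.disjoint_left.2 fun s hs hs' => hne (funext fun k => ?_)
    obtain ⟨w, hw⟩ := hmem c s hs k
    obtain ⟨w', hw'⟩ := hmem c' s hs' k
    have heq : c k + w ᵥ* G k = c' k + w' ᵥ* G k :=
      funext fun j => hφ ((hw j).symm.trans (hw' j))
    have := (hE k _).unique (y₁ := (c k, w)) (y₂ := (c' k, w'))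
      ⟨Fintype.mem_piFinset.1 hc k, rfl⟩ ⟨Fintype.mem_piFinset.1 hc' k, heq.symm⟩
    exact congrArg Prod.fst this
  have hsub : (⋃ c ∈ Fintype.piFinset E, B c) ⊆ intMat F d i := by
    intro s hs
    obtain ⟨c, -, hs⟩ := Set.mem_iUnion₂.1 hs
    intro k j
    obtain ⟨w, hw⟩ := hmem c s hs k
    exact (absv_le_one_iff _).2 ⟨_, (hw j).symm⟩
  have := measure_mono (μ := μ) hsub
  rw [hnorm, measure_biUnion_finset hdisj fun c _ => htrans _ hmeas,
    Finset.sum_congr rfl fun c _ => hB c, Finset.sum_const, Fintype.card_piFinset,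
    Finset.prod_congr rfl fun k _ => hEc k, Finset.prod_pow_eq_pow_sum, nsmul_eq_mul] at this
  exact_mod_cast this

lemma sum_exponents (hid : i ≤ d) (ℓ m : ℕ) :
    ∑ k : Fin d, (if (k : ℕ) < i then m + ℓ else ℓ) = i * (m + ℓ) + (d - i) * ℓ := by
  obtain ⟨r, rfl⟩ := Nat.exists_eq_add_of_le hid
  rw [Fin.sum_univ_add]
  simp

/-- If the wedge norm of the integral matrix `s` is at most `q ^ (-ℓ)` and its top minor is at
most `q ^ (-(m + ℓ))`, then `s = u T` with `det T = X ^ ℓ` and the top block of `u` is `w R` with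
`det R = X ^ m`, where `T` and `R` belong to prescribed finite families. -/
lemma exists_mem_rowLat [Fintype F] (hid : i ≤ d)
    {H : ℕ → Finset (Matrix (Fin i) (Fin i) (PowerSeries F))}
    (hHi : ∀ ℓ, ∀ T ∈ H ℓ, HasIndex T ℓ)
    (hH : ∀ (ℓ d : ℕ) (S : Matrix (Fin d) (Fin i) (PowerSeries F)),
        (∀ M : Matrix (Fin i) (Fin d) (PowerSeries F), PowerSeries.X ^ ℓ ∣ (M * S).det) →
        ∃ T ∈ H ℓ, ∃ U : Matrix (Fin d) (Fin i) (PowerSeries F), S = U * T)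
    {ℓ m : ℕ} {s : Matrix (Fin d) (Fin i) (LaurentSeries F)} (hs : s ∈ intMat F d i)
    (hw : wedgeNorm F s ≤ (Fintype.card F : ℝ) ^ (-(ℓ : ℤ)))
    (ht : m = 0 ∨ absv F ((s.submatrix (Fin.castLE hid) id).det) ≤
      (Fintype.card F : ℝ) ^ (-((m + ℓ : ℕ) : ℤ))) :
    ∃ T ∈ H ℓ, ∃ R ∈ H m,
      s ∈ rowLat fun k : Fin d => if (k : ℕ) < i then R * T else T := by
  let φ := HahnSeries.ofPowerSeries ℤ F
  have hφ : Function.Injective φ := HahnSeries.ofPowerSeries_injective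
  choose S hS using fun k j => (absv_le_one_iff (s k j)).1 (hs k j)
  have hsub : ∀ f : Fin i → Fin d,
      (s.submatrix f id).det = φ (((Matrix.of S).submatrix f id).det) := by
    intro f
    rw [RingHom.map_det]
    congr 1
    ext r j : 1
    simp [φ, hS]
  have hmin : ∀ M : Matrix (Fin i) (Fin d) (PowerSeries F),
      PowerSeries.X ^ ℓ ∣ (M * Matrix.of S).det := by
    refine dvd_det_mul_of_dvd_minors _ _ fun I => X_pow_dvd_of_absv_le ?_
    have := (le_ciSup (f := fun I : {I : Finset (Fin d) // I.card = i} => absv F (minor F s I))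
      (Set.finite_range _).bddAbove I).trans hw
    rwa [minor, hsub] at this
  obtain ⟨T, hT, U, hU⟩ := hH ℓ d _ hmin
  have htop : PowerSeries.X ^ m ∣ (U.submatrix (Fin.castLE hid) id).det := by
    rcases ht with rfl | ht
    · simp
    rw [hsub] at ht
    have h := X_pow_dvd_of_absv_le ht
    have he : (U * T).submatrix (Fin.castLE hid) id = U.submatrix (Fin.castLE hid) id * T := by
      ext r j : 1
      simp [Matrix.mul_apply]
    rw [hU, he, Matrix.det_mul, (hHi ℓ T hT).1, pow_add] at h
    exact (mul_dvd_mul_iff_right (pow_ne_zero _ PowerSeries.X_ne_zero)).1 h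
  obtain ⟨R, hR, W, hW⟩ := hH m i (U.submatrix (Fin.castLE hid) id) fun M => by
    rw [Matrix.det_mul]
    exact Dvd.dvd.mul_left htop _
  refine ⟨T, hT, R, hR, fun k => ?_⟩
  have hsk : ∀ j, s k j = φ ((U k ᵥ* T) j) := by
    intro j
    rw [← hS k j]
    exact congrArg φ (congrFun (congrFun hU k) j)
  by_cases hk : (k : ℕ) < i
  · refine ⟨W ⟨k, hk⟩, fun j => ?_⟩
    simp only [if_pos hk]
    rw [hsk j, ← Matrix.vecMul_vecMul]
    have : U k = W ⟨k, hk⟩ ᵥ* R := congrFun hW ⟨k, hk⟩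
    rw [this]
  · refine ⟨U k, fun j => ?_⟩
    simp only [if_neg hk]
    exact hsk j

/-- The measure estimate behind both conclusions, without the binomial factor. The case `m = 0`
needs no condition on the top minor. -/
lemma measure_le [Fintype F] (hid : i ≤ d)
    (μ : Measure (Matrix (Fin d) (Fin i) (LaurentSeries F)))
    (hinv : ∀ a, μ.map (fun s => a + s) = μ) (hnorm : μ (intMat F d i) = 1) (ℓ m : ℕ)
    (A : Set (Matrix (Fin d) (Fin i) (LaurentSeries F)))
    (hA : ∀ s ∈ A, s ∈ intMat F d i ∧ wedgeNorm F s ≤ (Fintype.card F : ℝ) ^ (-(ℓ : ℤ)) ∧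
      (m = 0 ∨ absv F ((s.submatrix (Fin.castLE hid) id).det) ≤
        (Fintype.card F : ℝ) ^ (-((m + ℓ : ℕ) : ℤ)))) :
    μ A ≤ ENNReal.ofReal (4 ^ i *
      (Fintype.card F : ℝ) ^ (-(ℓ * (d - i) : ℤ) - ((m + ℓ : ℕ) : ℤ))) := by
  obtain ⟨H, hcard, hHi, hH⟩ := exists_family F i
  set q := Fintype.card F with hq
  have hq0 : 0 < q := Fintype.card_pos
  have hc : ∀ ℓ, (H ℓ).card * q ^ ℓ ≤ 2 ^ i * q ^ (i * ℓ) := fun ℓ =>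
    (Finset.single_le_sum (f := fun b => (H b).card * q ^ b) (fun _ _ => Nat.zero_le _)
      (Finset.mem_range.2 (Nat.lt_succ_self ℓ))).trans (hcard ℓ)
  set N := i * (m + ℓ) + (d - i) * ℓ with hN
  have hlat : ∀ T ∈ H ℓ, ∀ R ∈ H m,
      μ (rowLat fun k : Fin d => if (k : ℕ) < i then R * T else T) ≤ ((q : ℝ≥0∞) ^ N)⁻¹ := by
    intro T hT R hR
    have := measure_rowLat_mul_le μ hinv hnorm
      (G := fun k : Fin d => if (k : ℕ) < i then R * T else T)
      (e := fun k : Fin d => if (k : ℕ) < i then m + ℓ else ℓ) fun k => by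
        by_cases hk : (k : ℕ) < i
        · simpa only [if_pos hk] using (hHi m R hR).mul (hHi ℓ T hT)
        · simpa only [if_neg hk] using hHi ℓ T hT
    rw [sum_exponents hid, mul_comm] at this
    exact ENNReal.le_inv_iff_mul_le.2 this
  have hcov : A ⊆ ⋃ p ∈ H ℓ ×ˢ H m,
      rowLat fun k : Fin d => if (k : ℕ) < i then p.2 * p.1 else p.1 := by
    intro s hs
    obtain ⟨h1, h2, h3⟩ := hA s hs
    obtain ⟨T, hT, R, hR, h⟩ := exists_mem_rowLat hid hHi hH h1 h2 h3
    exact Set.mem_iUnion₂.2 ⟨(T, R), Finset.mem_product.2 ⟨hT, hR⟩, h⟩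
  have h1 : μ A ≤ ((H ℓ).card * (H m).card : ℕ) * ((q : ℝ≥0∞) ^ N)⁻¹ := by
    refine (measure_mono hcov).trans ((measure_biUnion_finset_le _ _).trans ?_)
    refine (Finset.sum_le_card_nsmul _ _ ((q : ℝ≥0∞) ^ N)⁻¹ fun p hp => ?_).trans ?_
    · exact hlat _ (Finset.mem_product.1 hp).1 _ (Finset.mem_product.1 hp).2
    · rw [Finset.card_product, nsmul_eq_mul]
  have h2 : (((H ℓ).card * (H m).card : ℕ) : ℝ≥0∞) * ((q : ℝ≥0∞) ^ N)⁻¹ =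
      ENNReal.ofReal (((H ℓ).card * (H m).card : ℕ) * ((q : ℝ) ^ N)⁻¹) := by
    rw [ENNReal.ofReal_mul (by positivity), ENNReal.ofReal_natCast,
      ENNReal.ofReal_inv_of_pos (by positivity), ENNReal.ofReal_pow (by positivity),
      ENNReal.ofReal_natCast]
  rw [h2] at h1
  refine h1.trans (ENNReal.ofReal_le_ofReal ?_)
  have hqR : (0 : ℝ) < q := by exact_mod_cast hq0
  have h3 : ((H ℓ).card * (H m).card) * q ^ (m + ℓ) ≤ 4 ^ i * q ^ (i * (m + ℓ)) := by
    calc _ = ((H ℓ).card * q ^ ℓ) * ((H m).card * q ^ m) := by ring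
      _ ≤ (2 ^ i * q ^ (i * ℓ)) * (2 ^ i * q ^ (i * m)) := Nat.mul_le_mul (hc ℓ) (hc m)
      _ = _ := by
        rw [show (4 : ℕ) = 2 * 2 from rfl, mul_pow]
        ring
  have h4 : (((H ℓ).card * (H m).card : ℕ) : ℝ) * (q : ℝ) ^ (m + ℓ) ≤
      4 ^ i * (q : ℝ) ^ (i * (m + ℓ)) := by exact_mod_cast h3
  have h5 : (q : ℝ) ^ (-(ℓ * (d - i) : ℤ) - ((m + ℓ : ℕ) : ℤ)) =
      ((q : ℝ) ^ ((d - i) * ℓ))⁻¹ * ((q : ℝ) ^ (m + ℓ))⁻¹ := by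
    rw [zpow_sub₀ hqR.ne', zpow_neg, zpow_natCast, div_eq_mul_inv]
    congr 2
    rw [← zpow_natCast]
    congr 1
    push_cast [Nat.cast_sub hid]
    ring
  have h6 : (((H ℓ).card * (H m).card : ℕ) : ℝ) ≤
      4 ^ i * (q : ℝ) ^ (i * (m + ℓ)) / (q : ℝ) ^ (m + ℓ) :=
    (le_div_iff₀ (by positivity)).2 h4
  rw [h5, hN]
  refine (mul_le_mul_of_nonneg_right h6 (by positivity)).trans (le_of_eq ?_)
  rw [pow_add _ (i * (m + ℓ))]
  field_simp

end Measure

/-- **Theorem 3.3 (key measure estimate).** For `1 ≤ i ≤ d` there are constants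
`C₁, C₂ > 0` such that for all `0 ≤ ℓ ≤ ℓ'`,
`μ_{di}(F_{ℓ,ℓ'}(d,i)) ≤ C₁ binom(ℓ'-ℓ+binom(d,i), ℓ'-ℓ+1) q^{-ℓ(d-i)-ℓ'}` and
`μ_{di}(E_ℓ(d,i)) ≤ C₂ q^{-ℓ(d-i+1)}`, where
`E_ℓ(d,i) = {s ∈ M_{d,i}(𝒪) : ‖s₁ ∧ ⋯ ∧ s_i‖ ≤ q^{-ℓ}}` and
`F_{ℓ,ℓ'}(d,i) = E_ℓ(d,i) ∩ {s : |c_{{1,…,i}}(s)| ≤ q^{-ℓ'}}`, with `c_{{1,…,i}}(s)` the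
determinant of the top `i × i` submatrix of `s`, and `μ_{di}` the additive Haar measure
normalized so that `μ_{di}(M_{d,i}(𝒪)) = 1`. -/
theorem stmt3 (F : Type*) [Field F] [Fintype F] (d i : ℕ) (hi : 1 ≤ i) (hid : i ≤ d)
    (μ : MeasureTheory.Measure (Matrix (Fin d) (Fin i) (LaurentSeries F)))
    (hinv : ∀ a, μ.map (fun s => a + s) = μ)
    (hnorm : μ (intMat F d i) = 1) :
    ∃ C₁ : ℝ, 0 < C₁ ∧ ∃ C₂ : ℝ, 0 < C₂ ∧ ∀ ℓ ℓ' : ℕ, ℓ ≤ ℓ' →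
      μ ({s ∈ intMat F d i | wedgeNorm F s ≤ (Fintype.card F : ℝ) ^ (-(ℓ : ℤ))} ∩
            {s | absv F ((s.submatrix (Fin.castLE hid) id).det) ≤ (Fintype.card F : ℝ) ^ (-(ℓ' : ℤ))})
          ≤ ENNReal.ofReal (C₁ * ((ℓ' - ℓ + Nat.choose d i).choose (ℓ' - ℓ + 1) : ℝ) *
              (Fintype.card F : ℝ) ^ (-(ℓ * (d - i) : ℤ) - (ℓ' : ℤ))) ∧
      μ {s ∈ intMat F d i | wedgeNorm F s ≤ (Fintype.card F : ℝ) ^ (-(ℓ : ℤ))}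
          ≤ ENNReal.ofReal (C₂ * (Fintype.card F : ℝ) ^ (-(ℓ * (d - i + 1) : ℤ))) := by
  have hN : 0 < Nat.choose d i := Nat.choose_pos hid
  have hq : (0 : ℝ) < Fintype.card F := by exact_mod_cast Fintype.card_pos
  refine ⟨4 ^ i, by positivity, 4 ^ i, by positivity, fun ℓ ℓ' hℓ => ⟨?_, ?_⟩⟩
  · have h := measure_le hid μ hinv hnorm ℓ (ℓ' - ℓ) _ (fun s (hs : s ∈
      {s ∈ intMat F d i | wedgeNorm F s ≤ (Fintype.card F : ℝ) ^ (-(ℓ : ℤ))} ∩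
      {s | absv F ((s.submatrix (Fin.castLE hid) id).det) ≤
        (Fintype.card F : ℝ) ^ (-(ℓ' : ℤ))}) =>
      ⟨hs.1.1, hs.1.2, Or.inr (by rw [Nat.sub_add_cancel hℓ]; exact hs.2)⟩)
    refine h.trans (ENNReal.ofReal_le_ofReal ?_)
    rw [Nat.sub_add_cancel hℓ]
    refine mul_le_mul_of_nonneg_right ?_ (by positivity)
    refine le_mul_of_one_le_right (by positivity) ?_
    exact_mod_cast Nat.choose_pos (by omega)
  · have h := measure_le hid μ hinv hnorm ℓ 0 _ (fun s (hs : s ∈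
      {s ∈ intMat F d i | wedgeNorm F s ≤ (Fintype.card F : ℝ) ^ (-(ℓ : ℤ))}) =>
      ⟨hs.1, hs.2, Or.inl rfl⟩)
    convert h using 5
    push_cast
    ring
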